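/- arXiv:1506.05355 — 4 statements merged into one kernel-verified Lean document; each statement's English description precedes it below -/
import Mathlib

section
/- Let p be a prime and let m > 1 be a natural number that is not a power of p. Let l be the largest natural number with p^l < m. Then p does not divide the binomial coefficient C(m, p^l). -/
/-!
By Lucas' theorem, `C(m, c * p^l)` is congruent to `C(m / p^l, c)` modulo `p`, so `C(m, p^l)` is
congruent to `m / p^l`. When `m` is not a power of `p`, the maximal `l` is the position of the
leading base-`p` digit of `m`, and `m / p^l` is that digit, which lies strictly between `0` and `p`.
-/

section Prime

variable {p : ℕ} [Fact p.Prime]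

theorem choose_mul_prime_pow_modEq (m c l : ℕ) :
    m.choose (c * p ^ l) ≡ (m / p ^ l).choose c [MOD p] := by
  have hp : p.Prime := Fact.out
  have low_digit_eq_zero : ∀ i ∈ Finset.range l, c * p ^ l / p ^ i % p = 0 := fun i hi => by
    have dvd : p ^ i * p ∣ c * p ^ l :=
      (pow_succ p i ▸ pow_dvd_pow p (Finset.mem_range.mp hi)).mul_left c
    exact Nat.mod_eq_zero_of_dvd (Nat.dvd_div_of_mul_dvd dvd)
  have prod_eq_one :
      ∏ i ∈ Finset.range l, (m / p ^ i % p).choose (c * p ^ l / p ^ i % p) = 1 :=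
    Finset.prod_eq_one fun i hi => by rw [low_digit_eq_zero i hi, Nat.choose_zero_right]
  have lucas :=
    Choose.choose_modEq_choose_mul_prod_range_choose (n := m) (k := c * p ^ l) (p := p) l
  rw [prod_eq_one, Nat.cast_one, mul_one, Nat.mul_div_cancel c (pow_pos hp.pos l)] at lucas
  exact Int.natCast_modEq_iff.mp lucas

theorem dvd_choose_prime_pow_iff (m l : ℕ) : p ∣ m.choose (p ^ l) ↔ p ∣ m / p ^ l := by
  have choose_modEq : m.choose (p ^ l) ≡ m / p ^ l [MOD p] := by
    simpa only [one_mul, Nat.choose_one_right] using choose_mul_prime_pow_modEq m 1 l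
  exact choose_modEq.dvd_iff dvd_rfl

theorem not_dvd_choose_prime_pow_of_le_of_lt {m l : ℕ} (pow_le : p ^ l ≤ m)
    (lt_pow : m < p ^ (l + 1)) : ¬ p ∣ m.choose (p ^ l) := by
  have hp : p.Prime := Fact.out
  have digit_pos : 0 < m / p ^ l := Nat.div_pos pow_le (pow_pos hp.pos l)
  have digit_lt : m / p ^ l < p := Nat.div_lt_of_lt_mul (pow_succ p l ▸ lt_pow)
  rw [dvd_choose_prime_pow_iff]
  exact Nat.not_dvd_of_pos_of_lt digit_pos digit_lt

end Prime

/-- If `p` is prime, `m > 1` is not a power of `p`, and `l` is the largest natural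
number with `p^l < m`, then `p` does not divide `C(m, p^l)`. -/
theorem not_dvd_choose_pow_of_not_pow (p m l : ℕ) (hp : p.Prime) (hm : 1 < m)
    (hnp : ¬ ∃ s : ℕ, m = p ^ s)
    (hl : p ^ l < m) (hmax : ∀ l' : ℕ, p ^ l' < m → l' ≤ l) :
    ¬ p ∣ Nat.choose m (p ^ l) := by
  have : Fact p.Prime := ⟨hp⟩
  have m_le : m ≤ p ^ (l + 1) := not_lt.mp fun h => (hmax (l + 1) h).not_gt l.lt_succ_self
  have m_lt : m < p ^ (l + 1) := m_le.lt_of_ne fun h => hnp ⟨l + 1, h⟩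
  exact not_dvd_choose_prime_pow_of_le_of_lt hl.le m_lt
end

section
/- Let n be an even positive integer such that n + 1 is not a power of any prime, and let p be a prime dividing n + 1. Then there exists a natural number i with 4 ≤ i and 2i ≤ n + 1 such that p does not divide the binomial coefficient C(n+1, i). -/
/-!
Let `q` be the largest power of `p` with `q ≤ n + 1`. By Lucas' theorem `C(n+1, q)` is congruent
modulo `p` to the leading base-`p` digit of `n + 1`, hence is prime to `p`, and so is
`C(n+1, n+1-q)`; the smaller of `q` and `n + 1 - q` is the required `i`. Since `n + 1` and `p` are
odd and `q ≠ n + 1`, the difference `n + 1 - q` is a positive multiple of `2p`, hence at least `4`.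
If `q ≤ 3`, then `n + 1 < p q ≤ 3p ≤ q + 2p ≤ n + 1`, a contradiction.
-/

theorem choose_prime_pow_modEq_div (p n a : ℕ) [Fact p.Prime] :
    n.choose (p ^ a) ≡ n / p ^ a [MOD p] := by
  have hdigit : ∀ i ∈ Finset.range a, (n / p ^ i % p).choose (p ^ a / p ^ i % p) = 1 := by
    intro i hi
    have hia : i < a := Finset.mem_range.mp hi
    have hzero : p ^ a / p ^ i % p = 0 := by
      rw [Nat.pow_div hia.le (NeZero.pos p)]
      exact Nat.mod_eq_zero_of_dvd (dvd_pow_self p (Nat.sub_ne_zero_of_lt hia))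
    rw [hzero, Nat.choose_zero_right]
  have hlucas := Choose.choose_modEq_choose_mul_prod_range_choose (n := n) (k := p ^ a) (p := p) a
  rw [Nat.div_self (NeZero.pos (p ^ a)), Nat.choose_one_right] at hlucas
  rw [← Int.natCast_modEq_iff]
  simpa [← Nat.cast_prod, Finset.prod_eq_one hdigit] using hlucas

theorem not_dvd_choose_pow_log {p n : ℕ} (hp : p.Prime) (hn : n ≠ 0) :
    ¬ p ∣ n.choose (p ^ Nat.log p n) := by
  have : Fact p.Prime := ⟨hp⟩
  have hpos : 0 < n / p ^ Nat.log p n :=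
    Nat.div_pos (Nat.pow_log_le_self p hn) (pow_pos hp.pos _)
  have hlt : n / p ^ Nat.log p n < p := Nat.div_lt_of_lt_mul <| by
    simpa only [pow_succ] using Nat.lt_pow_succ_log_self hp.one_lt n
  rw [(choose_prime_pow_modEq_div p n _).dvd_iff dvd_rfl]
  exact Nat.not_dvd_of_pos_of_lt hpos hlt

theorem pow_log_add_two_mul_le_of_dvd_of_odd {b n : ℕ} (hb : 1 < b) (hdvd : b ∣ n) (hn : Odd n)
    (hne : b ^ Nat.log b n ≠ n) : b ^ Nat.log b n + 2 * b ≤ n := by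
  have hle : b ^ Nat.log b n ≤ n := Nat.pow_log_le_self b hn.pos.ne'
  have hlog : Nat.log b n ≠ 0 := (Nat.log_pos hb (Nat.le_of_dvd hn.pos hdvd)).ne'
  have hb_odd : Odd b := hn.of_dvd_nat hdvd
  have hdvd_sub : 2 * b ∣ n - b ^ Nat.log b n :=
    hb_odd.coprime_two_left.mul_dvd_of_dvd_of_dvd (Nat.Odd.sub_odd hn hb_odd.pow).two_dvd
      (Nat.dvd_sub hdvd (dvd_pow_self b hlog))
  have := Nat.le_of_dvd (Nat.sub_pos_of_lt (hle.lt_of_ne hne)) hdvd_sub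
  lia

theorem succ_lt_pow_log_of_pow_log_add_mul_le {b n c : ℕ} (hlog : Nat.log b n ≠ 0)
    (h : b ^ Nat.log b n + c * b ≤ n) : c + 1 < b ^ Nat.log b n := by
  have hb : 1 < b := (Nat.log_pos_iff.mp hlog.pos).2
  by_contra! hle
  refine (Nat.lt_pow_succ_log_self hb n).not_ge ?_
  calc b ^ (Nat.log b n + 1) = b ^ Nat.log b n * b := pow_succ _ _
    _ ≤ (c + 1) * b := Nat.mul_le_mul_right b hle
    _ = b + c * b := by ring
    _ ≤ b ^ Nat.log b n + c * b := Nat.add_le_add_right (Nat.le_self_pow hlog b) _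
    _ ≤ n := h

theorem exists_two_mul_le_not_dvd_choose {d n k m : ℕ} (hmk : m ≤ k) (hkn : k + m ≤ n)
    (hd : ¬ d ∣ n.choose k) : ∃ i, m ≤ i ∧ 2 * i ≤ n ∧ ¬ d ∣ n.choose i := by
  obtain hk | hk := le_total (2 * k) n
  · exact ⟨k, hmk, hk, hd⟩
  · refine ⟨n - k, by lia, by lia, ?_⟩
    rwa [Nat.choose_symm (by lia)]

/-- If `n` is an even positive integer such that `n + 1` is not a prime power, and
`p` is a prime dividing `n + 1`, then there is `i` with `4 ≤ i`, `2 * i ≤ n + 1`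
and `p` not dividing `C(n+1, i)`. -/
theorem exists_choose_not_dvd (n p : ℕ) (hn : 0 < n) (hev : Even n)
    (hnp : ¬ ∃ (q k : ℕ), q.Prime ∧ 1 ≤ k ∧ n + 1 = q ^ k)
    (hp : p.Prime) (hdvd : p ∣ n + 1) :
    ∃ i : ℕ, 4 ≤ i ∧ 2 * i ≤ n + 1 ∧ ¬ p ∣ Nat.choose (n + 1) i := by
  have hlog : 0 < Nat.log p (n + 1) := Nat.log_pos hp.one_lt (Nat.le_of_dvd n.succ_pos hdvd)
  have hne : p ^ Nat.log p (n + 1) ≠ n + 1 := fun h => hnp ⟨p, _, hp, hlog, h.symm⟩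
  have hgap : p ^ Nat.log p (n + 1) + 2 * p ≤ n + 1 :=
    pow_log_add_two_mul_le_of_dvd_of_odd hp.one_lt hdvd hev.add_one hne
  have hfour : 4 ≤ p ^ Nat.log p (n + 1) :=
    succ_lt_pow_log_of_pow_log_add_mul_le hlog.ne' hgap
  have hfour_gap : p ^ Nat.log p (n + 1) + 4 ≤ n + 1 := by linarith [hp.two_le]
  exact exists_two_mul_le_not_dvd_choose hfour hfour_gap
    (not_dvd_choose_pow_log hp n.succ_ne_zero)
end

section
/- Let n be an even positive integer such that n + 1 is not a power of any prime. Then the greatest common divisor of the set {n+1} ∪ {C(n+1, i) : i ∈ ℕ, 4 ≤ i, 2i ≤ n+1} equals 1. -/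
/-!
Let `p` be a prime dividing `m = n + 1`; it suffices to find `4 ≤ i ≤ m / 2` with `p ∤ C(m, i)`.
Write `m = p ^ a * r` with `p ∤ r`; since `m` is not a prime power, `2 ≤ r`. By Lucas,
`C(m, p ^ a * i) ≡ C(r, i)` modulo `p`, so `i = p ^ a` works as soon as `4 ≤ p ^ a`. Otherwise
`m = p * r` with `p ≤ 3`, and it is enough to find `2 ≤ i ≤ r / 2` with `p ∤ C(r, i)`: take `i = 2`
if `p ∤ r - 1`, and `i` the largest power of `p` dividing `r - 1` if `p ∣ r - 1`. The latter is
at most `r / 2` unless `r - 1` is itself a power of `p`, and then `m = p * (p ^ b + 1)` is even.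
-/

section

variable {p m r : ℕ}

lemma choose_pow_mul_modEq_choose_div (hp : p.Prime) (a n k : ℕ) :
    n.choose (p ^ a * k) ≡ (n / p ^ a).choose k [MOD p] := by
  have := Fact.mk hp
  induction a generalizing n with
  | zero => simp [Nat.ModEq.refl]
  | succ a ih =>
    have hmod : p ^ (a + 1) * k % p = 0 := by simp [pow_succ', mul_assoc]
    have hdiv : p ^ (a + 1) * k / p = p ^ a * k := by
      rw [pow_succ', mul_assoc, Nat.mul_div_cancel_left _ hp.pos]
    calc n.choose (p ^ (a + 1) * k)
        ≡ (n / p).choose (p ^ a * k) [MOD p] := by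
          simpa [hmod, hdiv] using
            Choose.choose_modEq_choose_mod_mul_choose_div_nat (p := p) (n := n)
              (k := p ^ (a + 1) * k)
      _ ≡ (n / p / p ^ a).choose k [MOD p] := ih (n / p)
      _ = (n / p ^ (a + 1)).choose k := by rw [Nat.div_div_eq_div_mul, pow_succ']

lemma dvd_choose_pow_iff_dvd_div (hp : p.Prime) (a n : ℕ) :
    p ∣ n.choose (p ^ a) ↔ p ∣ n / p ^ a := by
  simpa using (choose_pow_mul_modEq_choose_div hp a n 1).dvd_iff dvd_rfl

lemma not_dvd_choose_two (hp : p.Prime) (hr : ¬ p ∣ r) (hr' : ¬ p ∣ r - 1) :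
    ¬ p ∣ r.choose 2 := by
  have hdvd : r.choose 2 ∣ r * (r - 1) := by
    rw [Nat.choose_two_right]
    exact Nat.div_dvd_of_dvd r.even_mul_pred_self.two_dvd
  exact fun h ↦ hp.not_dvd_mul hr hr' (h.trans hdvd)

lemma exists_two_le_not_dvd_choose (hp : p.Prime) (hr : 4 ≤ r) (hpr : ¬ p ∣ r)
    (hpow : ∀ b, r ≠ p ^ b + 1) : ∃ i, 2 ≤ i ∧ 2 * i ≤ r ∧ ¬ p ∣ r.choose i := by
  by_cases hpr' : p ∣ r - 1
  · obtain ⟨b, s, hs, hrs⟩ :=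
      Nat.exists_eq_pow_mul_and_not_dvd (show r - 1 ≠ 0 by omega) p hp.ne_one
    have hb : b ≠ 0 := by
      rintro rfl
      exact hs (by simpa [hrs] using hpr')
    have hpb : 2 ≤ p ^ b := hp.two_le.trans (Nat.le_self_pow hb p)
    have hr_eq : r = p ^ b * s + 1 := by omega
    have hs_two : 2 ≤ s := by
      have : s ≠ 0 := by rintro rfl; simp at hs
      have : s ≠ 1 := by rintro rfl; exact hpow b (by simpa using hr_eq)
      omega
    have hdiv : r / p ^ b = s := by
      rw [hr_eq, Nat.mul_add_div (by omega), Nat.div_eq_of_lt (by omega), add_zero]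
    exact ⟨p ^ b, hpb, by nlinarith, by rwa [dvd_choose_pow_iff_dvd_div hp, hdiv]⟩
  · exact ⟨2, le_rfl, hr, not_dvd_choose_two hp hpr hpr'⟩

lemma exists_four_le_not_dvd_choose_mul (hp : p.Prime) (hp_le : p ≤ 3) (hr : 2 ≤ r)
    (hpr : ¬ p ∣ r) (hpow : ∀ b, r ≠ p ^ b + 1) :
    ∃ i, 4 ≤ i ∧ 2 * i ≤ p * r ∧ ¬ p ∣ (p * r).choose i := by
  have := Fact.mk hp
  have hp_two := hp.two_le
  have hr_four : 4 ≤ r := by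
    have := hpow 0
    have := hpow 1
    -- `2 = p ^ 0 + 1`, while `3 = p ^ 1 + 1` for `p = 2` and `p ∣ 3` for `p = 3`
    interval_cases p <;> omega
  obtain ⟨i, hi, hir, hpi⟩ := exists_two_le_not_dvd_choose hp hr_four hpr hpow
  have hlucas : (p * r).choose (p * i) ≡ r.choose i [MOD p] :=
    Choose.choose_mul_mul_modEq_choose_nat
  exact ⟨p * i, by nlinarith, by nlinarith, by rwa [hlucas.dvd_iff dvd_rfl]⟩

lemma exists_four_le_not_dvd_choose (hp : p.Prime) (hm : m ≠ 0) (hpm : p ∣ m)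
    (hpow : ¬ IsPrimePow m) (hexc : p ≤ 3 → ∀ b, m ≠ p * (p ^ b + 1)) :
    ∃ i, 4 ≤ i ∧ 2 * i ≤ m ∧ ¬ p ∣ m.choose i := by
  obtain ⟨a, r, hpr, rfl⟩ := Nat.exists_eq_pow_mul_and_not_dvd hm p hp.ne_one
  have ha : a ≠ 0 := by
    rintro rfl
    exact hpr (by simpa using hpm)
  have hr : 2 ≤ r := by
    have : r ≠ 0 := by rintro rfl; simp at hpr
    have : r ≠ 1 := by rintro rfl; exact hpow (by simpa using hp.isPrimePow.pow ha)
    omega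
  by_cases hpa : 4 ≤ p ^ a
  · have hdiv : p ^ a * r / p ^ a = r := Nat.mul_div_cancel_left r (pow_pos hp.pos a)
    exact ⟨p ^ a, hpa, by nlinarith, by rwa [dvd_choose_pow_iff_dvd_div hp, hdiv]⟩
  · obtain rfl : a = 1 := by
      by_contra ha_ne
      have : p ^ 2 ≤ p ^ a := Nat.pow_le_pow_right hp.pos (by omega)
      nlinarith [hp.two_le]
    rw [pow_one] at hpa hexc ⊢
    have hp_le : p ≤ 3 := by omega
    exact exists_four_le_not_dvd_choose_mul hp hp_le hr hpr fun b hrb ↦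
      hexc hp_le b (by rw [hrb])

end

theorem gcd_choose_eq_one_general (m : ℕ) (hm : m ≠ 0) (hpow : ¬ IsPrimePow m)
    (htwo : ∀ b, m ≠ 2 * (2 ^ b + 1)) (hthree : ∀ b, m ≠ 3 * (3 ^ b + 1)) :
    Nat.gcd m
      (Finset.gcd ((Finset.range (m + 1)).filter (fun i ↦ 4 ≤ i ∧ 2 * i ≤ m))
        (fun i ↦ Nat.choose m i)) = 1 := by
  by_contra hne
  obtain ⟨p, hp, hdvd⟩ := Nat.exists_prime_and_dvd hne
  obtain ⟨hpm, hpgcd⟩ := Nat.dvd_gcd_iff.mp hdvd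
  have hexc : p ≤ 3 → ∀ b, m ≠ p * (p ^ b + 1) := by
    intro hp_le
    have := hp.two_le
    interval_cases p
    exacts [htwo, hthree]
  obtain ⟨i, hi, him, hpi⟩ := exists_four_le_not_dvd_choose hp hm hpm hpow hexc
  have hmem : i ∈ (Finset.range (m + 1)).filter (fun i ↦ 4 ≤ i ∧ 2 * i ≤ m) := by
    simp only [Finset.mem_filter, Finset.mem_range]
    omega
  exact hpi (hpgcd.trans (Finset.gcd_dvd hmem))

/-- If `n` is an even positive integer and `n + 1` is not a prime power, then the
gcd of `{n+1} ∪ {C(n+1, i) : 4 ≤ i, 2i ≤ n+1}` equals `1`. -/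
theorem gcd_choose_eq_one (n : ℕ) (hn : 0 < n) (hev : Even n)
    (hnp : ¬ ∃ (q k : ℕ), q.Prime ∧ 1 ≤ k ∧ n + 1 = q ^ k) :
    Nat.gcd (n + 1)
      (Finset.gcd ((Finset.range (n + 2)).filter (fun i => 4 ≤ i ∧ 2 * i ≤ n + 1))
        (fun i => Nat.choose (n + 1) i)) = 1 := by
  have hpow : ¬ IsPrimePow (n + 1) := by
    simpa only [isPrimePow_nat_iff, Nat.succ_le_iff, eq_comm (a := n + 1)] using hnp
  have hodd : ¬ Even (n + 1) := Nat.not_even_iff_odd.mpr hev.add_one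
  refine gcd_choose_eq_one_general (n + 1) n.succ_ne_zero hpow (fun b h ↦ ?_) (fun b h ↦ ?_) <;>
    simp [h, parity_simps, show ¬ Even 3 by decide] at hodd
end

section
/- Let n be an even positive integer with n + 1 = p^k for some prime p and integer k ≥ 1, and suppose (p, k) ≠ (3, 2). Then the greatest common divisor of the set {n+1} ∪ {C(n+1, i) : i ∈ ℕ, 4 ≤ i, 2i ≤ n+1} equals p. -/
/-!
For `0 < i ≤ p ^ k` the exponent of `p` in `C(p ^ k, i)` is `k - v_p(i)`. Hence `p` divides every
`C(p ^ k, i)` with `0 < i < p ^ k`, while `gcd(p ^ k, C(p ^ k, p ^ (k - 1)))` is exactly `p`. The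
index `p ^ (k - 1)` never exceeds `p ^ k / 2`, and it is smaller than `4` only if `k = 1`, where
`p ^ k = p` already settles the claim, or `p ^ k` is `4` or `9`.
-/

theorem gcd_prime_pow_eq_pow_min {p N : ℕ} (hp : p.Prime) (hN : N ≠ 0) (k : ℕ) :
    (p ^ k).gcd N = p ^ min k (N.factorization p) := by
  obtain ⟨j, hjk, hj⟩ := (Nat.dvd_prime_pow hp).1 (Nat.gcd_dvd_left (p ^ k) N)
  have hjN : j ≤ N.factorization p :=
    (hp.pow_dvd_iff_le_factorization hN).1 (hj ▸ Nat.gcd_dvd_right _ _)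
  apply Nat.dvd_antisymm
  · exact hj ▸ pow_dvd_pow p (le_min hjk hjN)
  · exact Nat.dvd_gcd (pow_dvd_pow p (min_le_left _ _))
      ((hp.pow_dvd_iff_le_factorization hN).2 (min_le_right _ _))

theorem gcd_prime_pow_choose {p k i : ℕ} (hp : p.Prime) (hi : i ≠ 0) (hik : i ≤ p ^ k) :
    (p ^ k).gcd ((p ^ k).choose i) = p ^ (k - i.factorization p) := by
  rw [gcd_prime_pow_eq_pow_min hp (Nat.choose_ne_zero hik),
    Nat.factorization_choose_prime_pow hp hik hi, min_eq_right (Nat.sub_le _ _)]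

theorem gcd_prime_pow_succ_choose_pow {p : ℕ} (hp : p.Prime) (m : ℕ) :
    (p ^ (m + 1)).gcd ((p ^ (m + 1)).choose (p ^ m)) = p := by
  rw [gcd_prime_pow_choose hp (pow_ne_zero m hp.ne_zero)
      (Nat.pow_le_pow_right hp.pos (Nat.le_add_right m 1)),
    hp.factorization_pow, Finsupp.single_eq_same, Nat.add_sub_cancel_left, pow_one]

theorem dvd_gcd_prime_pow_gcd_choose {p k : ℕ} (hp : p.Prime) (hk : k ≠ 0) {s : Finset ℕ}
    (hs : ∀ i ∈ s, i ≠ 0 ∧ i ≠ p ^ k) : p ∣ (p ^ k).gcd (s.gcd (p ^ k).choose) :=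
  Nat.dvd_gcd (dvd_pow_self p hk)
    (Finset.dvd_gcd fun i hi => hp.dvd_choose_pow (hs i hi).1 (hs i hi).2)

theorem gcd_prime_pow_succ_gcd_choose_dvd {p m : ℕ} (hp : p.Prime) {s : Finset ℕ}
    (hm : m = 0 ∨ p ^ m ∈ s) : (p ^ (m + 1)).gcd (s.gcd (p ^ (m + 1)).choose) ∣ p := by
  rcases hm with rfl | hm
  · simpa only [zero_add, pow_one] using Nat.gcd_dvd_left p _
  · calc
      (p ^ (m + 1)).gcd (s.gcd (p ^ (m + 1)).choose)
        ∣ (p ^ (m + 1)).gcd ((p ^ (m + 1)).choose (p ^ m)) :=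
          Nat.gcd_dvd_gcd_of_dvd_right _ (Finset.gcd_dvd hm)
      _ = p := gcd_prime_pow_succ_choose_pow hp m

theorem gcd_prime_pow_succ_gcd_choose {p m : ℕ} (hp : p.Prime) {s : Finset ℕ}
    (hs : ∀ i ∈ s, i ≠ 0 ∧ i ≠ p ^ (m + 1)) (hm : m = 0 ∨ p ^ m ∈ s) :
    (p ^ (m + 1)).gcd (s.gcd (p ^ (m + 1)).choose) = p :=
  Nat.dvd_antisymm (gcd_prime_pow_succ_gcd_choose_dvd hp hm)
    (dvd_gcd_prime_pow_gcd_choose hp m.succ_ne_zero hs)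

theorem four_le_pow_of_ne {a m : ℕ} (ha : 2 ≤ a) (hm : m ≠ 0) (h₂ : (a, m) ≠ (2, 1))
    (h₃ : (a, m) ≠ (3, 1)) : 4 ≤ a ^ m := by
  rcases eq_or_ne m 1 with rfl | hm₁
  · simp only [ne_eq, Prod.mk.injEq, and_true] at h₂ h₃
    rw [pow_one]
    lia
  · calc
      4 = 2 ^ 2 := rfl
      _ ≤ a ^ 2 := Nat.pow_le_pow_left ha 2
      _ ≤ a ^ m := Nat.pow_le_pow_right (by lia) (by lia)

theorem gcd_choose_eq_p_general {n p k : ℕ} (hp : p.Prime) (hk : 1 ≤ k) (hpow : n + 1 = p ^ k)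
    (h₂ : (p, k) ≠ (2, 2)) (h₃ : (p, k) ≠ (3, 2)) :
    Nat.gcd (n + 1)
      (Finset.gcd ((Finset.range (n + 2)).filter (fun i => 4 ≤ i ∧ 2 * i ≤ n + 1))
        (fun i => Nat.choose (n + 1) i)) = p := by
  obtain ⟨m, rfl⟩ := Nat.exists_eq_add_of_le' hk
  have hs : ∀ i ∈ (Finset.range (n + 2)).filter (fun i => 4 ≤ i ∧ 2 * i ≤ n + 1),
      i ≠ 0 ∧ i ≠ p ^ (m + 1) := by
    intro i hi
    rw [Finset.mem_filter] at hi
    lia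
  have hm : m = 0 ∨ p ^ m ∈ (Finset.range (n + 2)).filter (fun i => 4 ≤ i ∧ 2 * i ≤ n + 1) := by
    refine or_iff_not_imp_left.2 fun hm₀ => ?_
    have h_four : 4 ≤ p ^ m :=
      four_le_pow_of_ne hp.two_le hm₀ (by simpa using h₂) (by simpa using h₃)
    have h_two_mul : 2 * p ^ m ≤ n + 1 := by
      rw [hpow, pow_succ']
      exact Nat.mul_le_mul_right _ hp.two_le
    rw [Finset.mem_filter, Finset.mem_range]
    lia
  rw [hpow] at hs hm ⊢
  exact gcd_prime_pow_succ_gcd_choose hp hs hm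

/-- If `n` is an even positive integer with `n + 1 = p^k` for a prime `p` and `k ≥ 1`,
and `(p, k) ≠ (3, 2)`, then the gcd of `{n+1} ∪ {C(n+1, i) : 4 ≤ i, 2i ≤ n+1}`
equals `p`. -/
theorem gcd_choose_eq_p (n p k : ℕ) (hn : 0 < n) (hev : Even n)
    (hp : p.Prime) (hk : 1 ≤ k) (hpow : n + 1 = p ^ k) (hne : (p, k) ≠ (3, 2)) :
    Nat.gcd (n + 1)
      (Finset.gcd ((Finset.range (n + 2)).filter (fun i => 4 ≤ i ∧ 2 * i ≤ n + 1))
        (fun i => Nat.choose (n + 1) i)) = p := by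
  have h₂ : (p, k) ≠ (2, 2) := by
    rintro ⟨⟩
    have hn₃ : n = 3 := by lia
    exact absurd hev (hn₃ ▸ by decide)
  exact gcd_choose_eq_p_general hp hk hpow h₂ hne
end
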